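/- Let A and B be the companion matrices of f(x) = (x-1)^6 and g(x) = (x+1)^4(x^2+1) respectively, regarded as elements of GL(6,ℤ). Then the elements t = A⁻¹B and r = A⁻¹BA both have infinite order, the subgroup of GL(6,ℤ) generated by A and B equals the subgroup generated by t and r, and this group is the internal free product of the cyclic subgroups ⟨t⟩ and ⟨r⟩; in particular, the hypergeometric group Γ(α,β) with α = (0,0,0,0,0,0) and β = (1/2,1/2,1/2,1/2,1/4,3/4) is isomorphic to ℤ * ℤ, a free group of rank 2. -/

import Mathlib

open Matrix

/-- The companion matrix of `f(x) = (x-1)^6 = x^6 - 6x^5 + 15x^4 - 20x^3 + 15x^2 - 6x + 1`. -/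
def companionF : Matrix (Fin 6) (Fin 6) ℤ :=
  !![0,0,0,0,0,-1; 1,0,0,0,0,6; 0,1,0,0,0,-15; 0,0,1,0,0,20; 0,0,0,1,0,-15; 0,0,0,0,1,6]

/-- The companion matrix of `g(x) = (x+1)^4(x^2+1) = x^6 + 4x^5 + 7x^4 + 8x^3 + 7x^2 + 4x + 1`. -/
def companionG : Matrix (Fin 6) (Fin 6) ℤ :=
  !![0,0,0,0,0,-1; 1,0,0,0,0,-4; 0,1,0,0,0,-7; 0,0,1,0,0,-8; 0,0,0,1,0,-7; 0,0,0,0,1,-4]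

/-- Integer vectors with six entries. -/
structure V6 where
  a : ℤ
  b : ℤ
  c : ℤ
  d : ℤ
  e : ℤ
  f : ℤ
deriving DecidableEq

namespace V6

def vec (v : V6) : Fin 6 → ℤ := ![v.a, v.b, v.c, v.d, v.e, v.f]

def dot (v w : V6) : ℤ :=
  v.a * w.a + v.b * w.b + v.c * w.c + v.d * w.d + v.e * w.e + v.f * w.f

def smul (n : ℤ) (v : V6) : V6 := ⟨n * v.a, n * v.b, n * v.c, n * v.d, n * v.e, n * v.f⟩

def add (v w : V6) : V6 := ⟨v.a + w.a, v.b + w.b, v.c + w.c, v.d + w.d, v.e + w.e, v.f + w.f⟩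

end V6

/-- Integer matrices of size six, as lists of rows. -/
structure M6 where
  a : V6
  b : V6
  c : V6
  d : V6
  e : V6
  f : V6
deriving DecidableEq

namespace M6

def mat (M : M6) : Matrix (Fin 6) (Fin 6) ℤ :=
  Matrix.of ![M.a.vec, M.b.vec, M.c.vec, M.d.vec, M.e.vec, M.f.vec]

def app (M : M6) (v : V6) : V6 :=
  ⟨M.a.dot v, M.b.dot v, M.c.dot v, M.d.dot v, M.e.dot v, M.f.dot v⟩

def tr (M : M6) : M6 :=
  ⟨⟨M.a.a, M.b.a, M.c.a, M.d.a, M.e.a, M.f.a⟩, ⟨M.a.b, M.b.b, M.c.b, M.d.b, M.e.b, M.f.b⟩,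
   ⟨M.a.c, M.b.c, M.c.c, M.d.c, M.e.c, M.f.c⟩, ⟨M.a.d, M.b.d, M.c.d, M.d.d, M.e.d, M.f.d⟩,
   ⟨M.a.e, M.b.e, M.c.e, M.d.e, M.e.e, M.f.e⟩, ⟨M.a.f, M.b.f, M.c.f, M.d.f, M.e.f, M.f.f⟩⟩

/-- Product of `M` with the transpose of `N`. -/
def mulT (M N : M6) : M6 :=
  ⟨N.app M.a, N.app M.b, N.app M.c, N.app M.d, N.app M.e, N.app M.f⟩

def mul (M N : M6) : M6 := M.mulT N.tr

def add (M N : M6) : M6 :=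
  ⟨M.a.add N.a, M.b.add N.b, M.c.add N.c, M.d.add N.d, M.e.add N.e, M.f.add N.f⟩

def smul (n : ℤ) (M : M6) : M6 :=
  ⟨M.a.smul n, M.b.smul n, M.c.smul n, M.d.smul n, M.e.smul n, M.f.smul n⟩

def one : M6 :=
  ⟨⟨1, 0, 0, 0, 0, 0⟩, ⟨0, 1, 0, 0, 0, 0⟩, ⟨0, 0, 1, 0, 0, 0⟩, ⟨0, 0, 0, 1, 0, 0⟩,
   ⟨0, 0, 0, 0, 1, 0⟩, ⟨0, 0, 0, 0, 0, 1⟩⟩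

theorem mat_app (M : M6) (v : V6) : M.mat *ᵥ v.vec = (M.app v).vec := by
  ext i
  fin_cases i <;>
    simp [mat, app, V6.vec, V6.dot, Matrix.mulVec, dotProduct, Fin.sum_univ_six]

theorem mat_mul (M N : M6) : (M.mul N).mat = M.mat * N.mat := by
  ext i j
  fin_cases i <;> fin_cases j <;>
    simp [mat, mul, mulT, tr, app, V6.vec, V6.dot, Matrix.mul_apply, Fin.sum_univ_six] <;> ring

theorem mat_add (M N : M6) : (M.add N).mat = M.mat + N.mat := by
  ext i j
  fin_cases i <;> fin_cases j <;> simp [mat, add, V6.add, V6.vec]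

theorem mat_smul (n : ℤ) (M : M6) : (M.smul n).mat = n • M.mat := by
  ext i j
  fin_cases i <;> fin_cases j <;> simp [mat, smul, V6.smul, V6.vec]

theorem mat_one : one.mat = 1 := by
  ext i j
  fin_cases i <;> fin_cases j <;> simp [mat, one, V6.vec]

theorem mat_tr (M : M6) : M.tr.mat = M.matᵀ := by
  ext i j
  fin_cases i <;> fin_cases j <;> simp [mat, tr, V6.vec]

end M6

/-- Bundle of a simplicial cone (rows of `q`), with a scaled inverse of its matrix. -/
structure Spx where
  q : M6
  adj : M6
  d : ℤ

/-- Generators of the invariant cone. -/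
def gens : List V6 :=
  [⟨-1, 5, -10, 10, -5, 1⟩,
   ⟨-11, 13, -38, 18, -15, 1⟩,
   ⟨-2540, 3650, -6861, 3937, -1919, 300⟩,
   ⟨-2881, 2963, -7539, 3250, -2260, 300⟩,
   ⟨-1196, 3717, -5377, 4332, -1775, 299⟩,
   ⟨-3009, 2545, -8975, 3160, -3588, 299⟩,
   ⟨-724, 2892, -4697, 3914, -1685, 300⟩,
   ⟨-3115, 2986, -9703, 4008, -4076, 300⟩,
   ⟨-2183, 3992, -6358, 4223, -1786, 296⟩,
   ⟨-2950, 2585, -7850, 2816, -2553, 296⟩,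
   ⟨-1758, 4072, -6039, 4388, -1758, 298⟩,
   ⟨-3010, 2466, -8265, 2782, -3010, 298⟩,
   ⟨-1391, 3477, -4850, 3829, -1367, 302⟩,
   ⟨-3465, 3117, -9646, 3469, -3441, 302⟩,
   ⟨-1077, 3770, -5628, 4554, -1919, 300⟩,
   ⟨-2881, 2346, -8772, 3130, -3723, 300⟩,
   ⟨-1501, 3796, -5338, 4212, -1470, 301⟩,
   ⟨-3346, 2711, -9110, 3127, -3315, 301⟩,
   ⟨-1447, 3914, -5532, 4442, -1675, 298⟩,
   ⟨-3093, 2412, -8772, 2940, -3321, 298⟩,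
   ⟨-896, 3259, -4973, 4050, -1737, 297⟩,
   ⟨-3015, 2781, -9283, 3572, -3856, 297⟩,
   ⟨-642, 2719, -4605, 3921, -1693, 300⟩,
   ⟨-3107, 2979, -9795, 4181, -4158, 300⟩,
   ⟨-675, 2753, -4514, 3774, -1643, 305⟩,
   ⟨-3237, 3241, -10126, 4262, -4205, 305⟩,
   ⟨-277, 1258, -2262, 2008, -877, 150⟩,
   ⟨-1523, 1442, -4938, 2192, -2123, 150⟩,
   ⟨-1842, 4073, -6053, 4352, -1743, 296⟩,
   ⟨-2993, 2456, -8155, 2735, -2894, 296⟩,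
   ⟨-2371, 3867, -6616, 4148, -1853, 301⟩,
   ⟨-2963, 2775, -7832, 3056, -2445, 301⟩,
   ⟨-1671, 4036, -5941, 4393, -1733, 297⟩,
   ⟨-3019, 2438, -8315, 2795, -3081, 297⟩]

/-- Simplicial cones covering the images of the generators. -/
def simps : List Spx :=
  [⟨⟨⟨-11, 13, -38, 18, -15, 1⟩,
    ⟨-2540, 3650, -6861, 3937, -1919, 300⟩,
    ⟨-2881, 2963, -7539, 3250, -2260, 300⟩,
    ⟨-3107, 2979, -9795, 4181, -4158, 300⟩,
    ⟨-277, 1258, -2262, 2008, -877, 150⟩,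
    ⟨-1523, 1442, -4938, 2192, -2123, 150⟩⟩,
    ⟨⟨61341086733300, 10250768048400, -49877020659900, -13927595871600, 45235454973300, -273917995938000⟩,
    ⟨-282664204800, 79294939200, 220627041600, 141332102400, -158589878400, -679138900800⟩,
    ⟨158589878400, -141332102400, -220627041600, -79294939200, 282664204800, 865250390400⟩,
    ⟨505040798400, 758185732800, 0, -758185732800, -505040798400, 1770765470400⟩,
    ⟨281133201639, 30597809772, -94272096317, -93476516628, 32984548839, 1289699562836⟩,
    ⟨-1452006723861, -1491233402628, 426785567383, 1578624294972, 427378695339, -2372745047164⟩⟩,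
    150688269412800⟩,
   ⟨⟨⟨-2540, 3650, -6861, 3937, -1919, 300⟩,
    ⟨-2881, 2963, -7539, 3250, -2260, 300⟩,
    ⟨-724, 2892, -4697, 3914, -1685, 300⟩,
    ⟨-1758, 4072, -6039, 4388, -1758, 298⟩,
    ⟨-2881, 2346, -8772, 3130, -3723, 300⟩,
    ⟨-3237, 3241, -10126, 4262, -4205, 305⟩⟩,
    ⟨⟨-662845114008780, -203688370601450, 481411507607020, 374528949793155, -350545549004470, 1045937323014230⟩,
    ⟨435542223069820, 16115586240845, -407002927461670, -181146901490750, 418200399865530, -764299366617415⟩,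
    ⟨12667732267919, -133578247041463, -17507882341382, 113920653651797, 61746082647499, 232000600303527⟩,
    ⟨293985284414255, 295385148129890, -149370612539715, -307046885414710, 26498260502455, -321903970383170⟩,
    ⟨-168482042060665, 131856185524035, 218489930255530, -116271079587330, -297333619205510, 1590053241887730⟩,
    ⟨89598509718242, -102414165178024, -124933593052506, 112099951290236, 139289587145422, -1432727516155719⟩⟩,
    98198263974742645⟩,
   ⟨⟨⟨-2881, 2963, -7539, 3250, -2260, 300⟩,
    ⟨-2950, 2585, -7850, 2816, -2553, 296⟩,
    ⟨-3465, 3117, -9646, 3469, -3441, 302⟩,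
    ⟨-2881, 2346, -8772, 3130, -3723, 300⟩,
    ⟨-1447, 3914, -5532, 4442, -1675, 298⟩,
    ⟨-2963, 2775, -7832, 3056, -2445, 301⟩⟩,
    ⟨⟨-71748179457684, 35529361226716, 56174485276148, -11265566571732, -58552191040212, 66585381712396⟩,
    ⟨-24842078734254, 59442689219746, 34028411849328, -50140433324682, -49635214668382, 198741010317546⟩,
    ⟨2260862471816, 5118999090336, -2758489460272, -2455077522532, 367330395408, -68803776408344⟩,
    ⟨-4867385685963, -4952620950653, 4165369948186, 5123583863141, -4693094207159, 15987870971707⟩,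
    ⟨6668323275147, 1658977625537, -3013191961574, -1736430771429, 1982261234611, 5675816167637⟩,
    ⟨91920212777246, -95708874251014, -87851732402492, 59611471290278, 109514822221678, -200468222125994⟩⟩,
    4171032741936260⟩,
   ⟨⟨⟨-2881, 2963, -7539, 3250, -2260, 300⟩,
    ⟨-1196, 3717, -5377, 4332, -1775, 299⟩,
    ⟨-2950, 2585, -7850, 2816, -2553, 296⟩,
    ⟨-3465, 3117, -9646, 3469, -3441, 302⟩,
    ⟨-2881, 2346, -8772, 3130, -3723, 300⟩,
    ⟨-2993, 2456, -8155, 2735, -2894, 296⟩⟩,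
    ⟨⟨-70682036340137, 16758405905501, 51032995373338, 9192261366433, -45255552958161, 24843555748374⟩,
    ⟨8587246602542, 5463183890810, -2580843801068, -4580129714014, 246761115358, 15128546228188⟩,
    ⟨140499413538390, -116607109172478, -128219837902156, 49914701109162, 153145510840518, -108258690558020⟩,
    ⟨9430320986429, 6403383327487, -9554453411922, -2685497047429, 5572121113829, -141715450628414⟩,
    ⟨7076244141515, -32075624651223, -9710320953806, 24383366191245, 14135109417427, -16933224318754⟩,
    ⟨-94329839256211, 120079581724719, 98693874730062, -76577570617573, -127538852352843, 257107840773794⟩⟩,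
    8157817125202288⟩,
   ⟨⟨⟨-2881, 2963, -7539, 3250, -2260, 300⟩,
    ⟨-3465, 3117, -9646, 3469, -3441, 302⟩,
    ⟨-3093, 2412, -8772, 2940, -3321, 298⟩,
    ⟨-3015, 2781, -9283, 3572, -3856, 297⟩,
    ⟨-675, 2753, -4514, 3774, -1643, 305⟩,
    ⟨-3019, 2438, -8315, 2795, -3081, 297⟩⟩,
    ⟨⟨-73197206529880, -41805446187725, 33607103263856, 59805070392089, -897023397766, -32109514826523⟩,
    ⟨86986816799001, 58937077173180, -55507716458589, -60963290790123, 34743686871723, -219475958165064⟩,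
    ⟨45156554615106, -143231120020377, -80082521777043, 79241328276444, 116313219616059, -146395765922598⟩,
    ⟨-71570429356079, -9780396651661, 56097977166454, 42821976751921, -58167334693235, -83073475628499⟩,
    ⟨28980010048176, 8753662520703, -13579386041583, -12073022897301, 8880687976572, 48289982585796⟩,
    ⟨-18013452981731, 126802764487604, 60694964327077, -108351441875534, -102079923536969, 504691819155438⟩⟩,
    20408560657428231⟩,
   ⟨⟨⟨-2881, 2963, -7539, 3250, -2260, 300⟩,
    ⟨-2950, 2585, -7850, 2816, -2553, 296⟩,
    ⟨-3465, 3117, -9646, 3469, -3441, 302⟩,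
    ⟨-642, 2719, -4605, 3921, -1693, 300⟩,
    ⟨-1842, 4073, -6053, 4352, -1743, 296⟩,
    ⟨-2993, 2456, -8155, 2735, -2894, 296⟩⟩,
    ⟨⟨-180018897154608, -90138833615278, 105885572957356, 129515213498736, -68671876631590, -23240730568396⟩,
    ⟨302713496008618, 81654898639688, -233003969603526, -168790816745356, 245221450718990, -78907254874084⟩,
    ⟨32804415216468, -15158301154312, -36038469210176, 17539373945044, 29665322035640, -407432634458309⟩,
    ⟨14232001667094, -18614370079846, -10013886083508, 13708710754802, 10947528894270, 2833978379528⟩,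
    ⟨14176623531608, 42146236818478, 2607531831694, -33062741293286, -12210189223910, 51602055792321⟩,
    ⟨-182332230179142, 1887270140278, 169998166283044, 38799273553964, -204773501135510, 539464291398271⟩⟩,
    22432410062616650⟩,
   ⟨⟨⟨-2881, 2963, -7539, 3250, -2260, 300⟩,
    ⟨-2950, 2585, -7850, 2816, -2553, 296⟩,
    ⟨-1758, 4072, -6039, 4388, -1758, 298⟩,
    ⟨-3346, 2711, -9110, 3127, -3315, 301⟩,
    ⟨-642, 2719, -4605, 3921, -1693, 300⟩,
    ⟨-2963, 2775, -7832, 3056, -2445, 301⟩⟩,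
    ⟨⟨-90586304326626, 1755054629069, 79378919423666, 13379867066596, -75763284368827, 406272746091008⟩,
    ⟨-45196154749611, 29591157488967, 56362876543638, -27962295277131, -67357225284642, 485603784321444⟩,
    ⟨8280540217575, 5980376842722, -5441239642041, -4645369883295, 3528611470746, -39376706116347⟩,
    ⟨-5330127102711, -2789349481771, 3924595868882, 6113146876468, -7695119089933, -49208073015637⟩,
    ⟨-1100079228999, -3094958761109, 1822841338498, 2519781021791, -1760090888087, 25254472244863⟩,
    ⟨132959282875917, -30895579675217, -134896191457712, 10136903624318, 147705833518657, -805042812944582⟩⟩,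
    4333110563211399⟩,
   ⟨⟨⟨-1391, 3477, -4850, 3829, -1367, 302⟩,
    ⟨-3465, 3117, -9646, 3469, -3441, 302⟩,
    ⟨-2881, 2346, -8772, 3130, -3723, 300⟩,
    ⟨-3346, 2711, -9110, 3127, -3315, 301⟩,
    ⟨-3093, 2412, -8772, 2940, -3321, 298⟩,
    ⟨-1523, 1442, -4938, 2192, -2123, 150⟩⟩,
    ⟨⟨150191405251, 150191405251, 150191405251, 150191405251, 150191405251, 4956316373283⟩,
    ⟨6949829144633, 4159253490361, -3804399359687, -3768869190151, 1080021983929, -24299532315111⟩,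
    ⟨-1510937998325, 4577824417179, 3393670738235, -3083547645349, -6596094064565, 4074623092779⟩,
    ⟨-17413338238634, -816189421002, 10307787250678, 4209366988726, -7011778240938, 9622312044630⟩,
    ⟨12290159201567, -6161932902289, -9795712841297, 377129519663, 11365948804511, 16902874024255⟩,
    ⟨-746516258704, -3952471086832, -653679699856, 4256672827856, 2205308550768, -12417722384784⟩⟩,
    1451449740345664⟩,
   ⟨⟨⟨-3009, 2545, -8975, 3160, -3588, 299⟩,
    ⟨-3010, 2466, -8265, 2782, -3010, 298⟩,
    ⟨-2881, 2346, -8772, 3130, -3723, 300⟩,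
    ⟨-3346, 2711, -9110, 3127, -3315, 301⟩,
    ⟨-3015, 2781, -9283, 3572, -3856, 297⟩,
    ⟨-1523, 1442, -4938, 2192, -2123, 150⟩⟩,
    ⟨⟨4004837318207, -1002347878718, -3197287300566, -681826408132, 2819758217539, -5083610873291⟩,
    ⟨379246041928, 379246041928, 379246041928, 379246041928, 379246041928, 12515119383624⟩,
    ⟨-2009112032433, -396153102434, 1335997484410, 184287866756, -1574019170589, 2419526821609⟩,
    ⟨-1796609929190, -294218433804, 487293261164, 61359835744, -617352591534, -9005734191738⟩,
    ⟨-827751102501, 1935360044986, 1269656211858, -498930379260, -1624391046593, -912123602687⟩,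
    ⟨525957314803, -1204730392090, -543925529870, 1101849517276, 1228999963519, 2323478836261⟩⟩,
    302259095416616⟩,
   ⟨⟨⟨-3009, 2545, -8975, 3160, -3588, 299⟩,
    ⟨-3010, 2466, -8265, 2782, -3010, 298⟩,
    ⟨-675, 2753, -4514, 3774, -1643, 305⟩,
    ⟨-1842, 4073, -6053, 4352, -1743, 296⟩,
    ⟨-2993, 2456, -8155, 2735, -2894, 296⟩,
    ⟨-2371, 3867, -6616, 4148, -1853, 301⟩⟩,
    ⟨⟨13863829891984, -20214635577358, -19487938893200, 21866846781068, 19404651460846, -241322021783376⟩,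
    ⟨-142444771773034, 90240384066604, 172826584216758, -56857018458028, -220076846135474, 946063384696068⟩,
    ⟨403107096793, -7606215969446, 619378046906, 5274958085429, 1740864531234, 52531910553791⟩,
    ⟨26037493483454, 33939159359598, -8056433195244, -31910819269330, -6301091744980, -7039996306636⟩,
    ⟨135636085732846, -65171363855548, -158235335315896, 25504380527008, 201193093351184, -685234297655386⟩,
    ⟨-32143090571049, -30839966819720, 11156228596226, 35523747390779, 5189080412344, -39265262730241⟩⟩,
    9061801750544042⟩,
   ⟨⟨⟨-2881, 2963, -7539, 3250, -2260, 300⟩,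
    ⟨-1758, 4072, -6039, 4388, -1758, 298⟩,
    ⟨-1077, 3770, -5628, 4554, -1919, 300⟩,
    ⟨-2881, 2346, -8772, 3130, -3723, 300⟩,
    ⟨-3107, 2979, -9795, 4181, -4158, 300⟩,
    ⟨-3019, 2438, -8315, 2795, -3081, 297⟩⟩,
    ⟨⟨-27588344953440, -25840918556400, 15935725308960, 25256848428240, 276701655840, 143017267389840⟩,
    ⟨-18770524647360, 14961763076400, 18069486033840, -4230476600640, -21191679361440, 12240410999760⟩,
    ⟨23368688006547, -5787809129883, -17928995588664, -1621035368376, 17684247462861, -18191549769816⟩,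
    ⟨-57307342645223, -18516576778353, 52481712095576, 25169447472184, -43367119431849, 352037987071144⟩,
    ⟨13723176140872, 2233388102712, -15086721435424, -1365821128016, 11885048261016, -165069078840656⟩,
    ⟨67120415421840, 33383735730000, -53889639569760, -43673905031040, 34920730859760, -303183472533840⟩⟩,
    7140538890531600⟩,
   ⟨⟨⟨-3009, 2545, -8975, 3160, -3588, 299⟩,
    ⟨-3465, 3117, -9646, 3469, -3441, 302⟩,
    ⟨-2881, 2346, -8772, 3130, -3723, 300⟩,
    ⟨-3346, 2711, -9110, 3127, -3315, 301⟩,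
    ⟨-3237, 3241, -10126, 4262, -4205, 305⟩,
    ⟨-3019, 2438, -8315, 2795, -3081, 297⟩⟩,
    ⟨⟨5450759351123, -4866579769495, -4687005406494, 2769459045431, 6685249824155, 7423335623951⟩,
    ⟨-2076108721295, 4513496284208, 2272629826621, -3386564165561, -4522678466573, -9574695875096⟩,
    ⟨-4135613301094, 4545289843803, 3657654046161, -3425629167650, -6393459870799, -11033859056282⟩,
    ⟨-161900161158, -3558135787547, -1294206057242, 2337078248517, 2598526496090, -3708547045843⟩,
    ⟨525252969348, -1072059602859, -390430664745, 1286822130741, 1234161030716, 3901586966640⟩,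
    ⟨425661855323, 425661855323, 425661855323, 425661855323, 425661855323, 14046841225659⟩⟩,
    263484688444937⟩,
   ⟨⟨⟨-11, 13, -38, 18, -15, 1⟩,
    ⟨-3115, 2986, -9703, 4008, -4076, 300⟩,
    ⟨-1077, 3770, -5628, 4554, -1919, 300⟩,
    ⟨-2881, 2346, -8772, 3130, -3723, 300⟩,
    ⟨-3346, 2711, -9110, 3127, -3315, 301⟩,
    ⟨-3015, 2781, -9283, 3572, -3856, 297⟩⟩,
    ⟨⟨2640829802994, -1621680705006, -2381607535566, 366050740914, 2500961306034, -4378091941038⟩,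
    ⟨-39762993338, -13851842138, 24433952902, 26144018182, -12523263098, 12729957606⟩,
    ⟨527761579, 527761579, 527761579, 527761579, 527761579, 17416132107⟩,
    ⟨8344270943, -27019957057, -8271964897, 13105672223, 14246908703, 106513286559⟩,
    ⟨-7337452800, -3668726400, 0, 3668726400, 7337452800, 11006179200⟩,
    ⟨29747581598, 49929894398, -8839452322, -45129875362, -18131167522, -117394174146⟩⟩,
    5066511158400⟩,
   ⟨⟨⟨-11, 13, -38, 18, -15, 1⟩,
    ⟨-1196, 3717, -5377, 4332, -1775, 299⟩,
    ⟨-2183, 3992, -6358, 4223, -1786, 296⟩,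
    ⟨-3237, 3241, -10126, 4262, -4205, 305⟩,
    ⟨-1523, 1442, -4938, 2192, -2123, 150⟩,
    ⟨-2993, 2456, -8155, 2735, -2894, 296⟩⟩,
    ⟨⟨165171523764786, -47096048893299, -180572489331500, 12290418766038, 220894600230570, -867863871777973⟩,
    ⟨738762701796, 127663699968, -205121508984, -259592925060, -35750548260, 2808558705960⟩,
    ⟨-908087736780, -62957948760, 374578432452, 404521406856, 26870974452, -1814852044152⟩,
    ⟨34342597050, 1564357401759, 554057494372, -1121303711922, -1586472803934, -2518318113595⟩,
    ⟨-1618571459940, -2422736410026, 677884712264, 2219955191340, 461113588176, 6408416715550⟩,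
    ⟨388660896540, -291075643908, -471762290916, -153399044484, 664014095388, 2853680409468⟩⟩,
    472563860123628⟩,
   ⟨⟨⟨-11, 13, -38, 18, -15, 1⟩,
    ⟨-3009, 2545, -8975, 3160, -3588, 299⟩,
    ⟨-1391, 3477, -4850, 3829, -1367, 302⟩,
    ⟨-3465, 3117, -9646, 3469, -3441, 302⟩,
    ⟨-3093, 2412, -8772, 2940, -3321, 298⟩,
    ⟨-3107, 2979, -9795, 4181, -4158, 300⟩⟩,
    ⟨⟨30076073681135, -9229874422945, -22533943178545, 1768781550335, 23327390599695, -33926007163425⟩,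
    ⟨292613229289, 254977387705, -58142989175, -266674349159, -156130740279, 152783074041⟩,
    ⟨5532477705, 5532477705, 5532477705, 5532477705, 5532477705, 182571764265⟩,
    ⟨-109830907242, 118650543750, 57635248950, -48381254298, -61423414218, -610946224218⟩,
    ⟨-76918284964, -316677935620, -64093615780, 211003195004, 243473679324, 689202308604⟩,
    ⟨-210492181997, -33805373885, 133139803315, 93427424227, -107734642893, -114344894973⟩⟩,
    53465864541120⟩,
   ⟨⟨⟨-11, 13, -38, 18, -15, 1⟩,
    ⟨-724, 2892, -4697, 3914, -1685, 300⟩,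
    ⟨-1758, 4072, -6039, 4388, -1758, 298⟩,
    ⟨-3010, 2466, -8265, 2782, -3010, 298⟩,
    ⟨-2963, 2775, -7832, 3056, -2445, 301⟩,
    ⟨-3019, 2438, -8315, 2795, -3081, 297⟩⟩,
    ⟨⟨5344397689188, -821360680019, -4818576382406, 459999516717, 3686350757696, -39923571120955⟩,
    ⟨18181309384, -18693089554, -8495214500, 8018638702, 10615428272, 135082343870⟩,
    ⟨-16687488656, 33884467017, 20270783650, -11392398327, -26878029552, -51877941131⟩,
    ⟨939157059736, 383066697173, -625869268502, -611468348699, 445265501056, -746758816807⟩,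
    ⟨-81763570124, -78930112869, 20269511862, 82114706219, 41640255168, 43472762267⟩,
    ⟨-879070330232, -316714462656, 611900222720, 532088838096, -485131860448, 845145852888⟩⟩,
    26700997924624⟩,
   ⟨⟨⟨-2881, 2963, -7539, 3250, -2260, 300⟩,
    ⟨-3465, 3117, -9646, 3469, -3441, 302⟩,
    ⟨-896, 3259, -4973, 4050, -1737, 297⟩,
    ⟨-3237, 3241, -10126, 4262, -4205, 305⟩,
    ⟨-1523, 1442, -4938, 2192, -2123, 150⟩,
    ⟨-3019, 2438, -8315, 2795, -3081, 297⟩⟩,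
    ⟨⟨-123952058497624, 6547303308469, 77424332837754, 42452312537061, -40368220538380, 35626385372781⟩,
    ⟨190829925654767, -39019994287932, -169945209489587, -27042650354713, 170237276379975, -477316057279698⟩,
    ⟨48997580053177, 938059882893, -26490409686552, -9860295622723, 21433939960615, 63860077193717⟩,
    ⟨-180658393350410, 132766563417105, 173134634500925, -21427647667595, -206240945060850, -16889433542590⟩,
    ⟨157860093952831, -210513159390896, -171971921699831, 94474584583931, 218645002281300, -102851968279109⟩,
    ⟨-12038738704699, 2102409305094, 30146565062719, -31232527619594, -52391695529215, 564874639654206⟩⟩,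
    32693604744842335⟩,
   ⟨⟨⟨-1, 5, -10, 10, -5, 1⟩,
    ⟨-3009, 2545, -8975, 3160, -3588, 299⟩,
    ⟨-3465, 3117, -9646, 3469, -3441, 302⟩,
    ⟨-2881, 2346, -8772, 3130, -3723, 300⟩,
    ⟨-3346, 2711, -9110, 3127, -3315, 301⟩,
    ⟨-3015, 2781, -9283, 3572, -3856, 297⟩⟩,
    ⟨⟨89995877788, 89995877788, 89995877788, 89995877788, 89995877788, 2969863967004⟩,
    ⟨60173504859, -96347980677, -75714002885, 51728064891, 93084869723, -267082920901⟩,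
    ⟨-26961138918, 112015038298, 58951661658, -73205933094, -83416257510, 317458329562⟩,
    ⟨-52152536420, 135212457116, 86044788380, -88486825188, -117875950820, 427721559580⟩,
    ⟨5901586190, -83319567666, -36341863218, 58055815886, 59195745550, -225498638770⟩,
    ⟨13231560961, -69343563935, -34105880543, 52601856865, 49879473665, -257730625119⟩⟩,
    2879868089216⟩]

/-- The matrices which are shown to preserve the cone. -/
def mats : List M6 :=
  [⟨⟨-1, 0, 0, 0, -10, -161⟩,
    ⟨1, -1, 0, 0, 8, 144⟩,
    ⟨0, 1, -1, 0, -28, -471⟩,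
    ⟨0, 0, 1, -1, 8, 176⟩,
    ⟨0, 0, 0, 1, -11, -183⟩,
    ⟨0, 0, 0, 0, 1, 15⟩⟩,
   ⟨⟨0, 0, 0, 0, 10, -39⟩,
    ⟨-1, 0, 0, 0, -8, 36⟩,
    ⟨0, -1, 0, 0, 28, -105⟩,
    ⟨0, 0, -1, 0, -8, 40⟩,
    ⟨0, 0, 0, -1, 10, -33⟩,
    ⟨0, 0, 0, 0, -1, 4⟩⟩,
   ⟨⟨0, 0, 0, -10, 39, -86⟩,
    ⟨0, 0, 0, 8, -36, 87⟩,
    ⟨1, 0, 0, -28, 105, -228⟩,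
    ⟨0, 1, 0, 8, -40, 97⟩,
    ⟨0, 0, 1, -10, 33, -70⟩,
    ⟨0, 0, 0, 1, -4, 9⟩⟩,
   ⟨⟨39, -86, 151, -234, 335, -454⟩,
    ⟨-36, 87, -160, 255, -372, 511⟩,
    ⟨104, -228, 400, -620, 888, -1204⟩,
    ⟨-40, 96, -176, 280, -408, 560⟩,
    ⟨33, -70, 121, -186, 265, -358⟩,
    ⟨-4, 9, -16, 25, -36, 49⟩⟩,
   ⟨⟨296, -368, 440, -512, 584, -656⟩,
    ⟨-336, 424, -512, 600, -688, 776⟩,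
    ⟨784, -976, 1168, -1360, 1552, -1744⟩,
    ⟨-368, 464, -560, 656, -752, 848⟩,
    ⟨232, -288, 344, -400, 456, -512⟩,
    ⟨-32, 40, -48, 56, -64, 72⟩⟩,
   ⟨⟨288, -288, 288, -288, 288, -288⟩,
    ⟨-352, 352, -352, 352, -352, 352⟩,
    ⟨768, -768, 768, -768, 768, -768⟩,
    ⟨-384, 384, -384, 384, -384, 384⟩,
    ⟨224, -224, 224, -224, 224, -224⟩,
    ⟨-32, 32, -32, 32, -32, 32⟩⟩,
   ⟨⟨0, 0, 0, 10, -39, -854⟩,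
    ⟨0, 0, 0, -8, 36, 761⟩,
    ⟨-1, 0, 0, 28, -105, -2340⟩,
    ⟨0, -1, 0, -8, 40, 847⟩,
    ⟨0, 0, -1, 10, -33, -806⟩,
    ⟨0, 0, 0, -1, 4, 87⟩⟩,
   ⟨⟨-39, 86, -151, 234, -335, -20602⟩,
    ⟨36, -87, 160, -255, 372, 22081⟩,
    ⟨-104, 228, -400, 620, -888, -54604⟩,
    ⟨40, -96, 176, -280, 408, 24272⟩,
    ⟨-33, 70, -121, 186, -265, -16474⟩,
    ⟨4, -9, 16, -25, 36, 2191⟩⟩,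
   ⟨⟨-296, 368, -440, 512, -584, -55664⟩,
    ⟨336, -424, 512, -600, 688, 64760⟩,
    ⟨-784, 976, -1168, 1360, -1552, -147760⟩,
    ⟨368, -464, 560, -656, 752, 70832⟩,
    ⟨-232, 288, -344, 400, -456, -43520⟩,
    ⟨32, -40, 48, -56, 64, 6072⟩⟩,
   ⟨⟨-288, 288, -288, 288, -288, -36576⟩,
    ⟨352, -352, 352, -352, 352, 44704⟩,
    ⟨-768, 768, -768, 768, -768, -97536⟩,
    ⟨384, -384, 384, -384, 384, 48768⟩,
    ⟨-224, 224, -224, 224, -224, -28448⟩,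
    ⟨32, -32, 32, -32, 32, 4064⟩⟩,
   ⟨⟨0, 0, 10, -39, 86, -151⟩,
    ⟨0, 0, -8, 36, -87, 160⟩,
    ⟨0, 0, 28, -105, 228, -400⟩,
    ⟨-1, 0, -8, 40, -97, 176⟩,
    ⟨0, -1, 10, -33, 70, -122⟩,
    ⟨0, 0, -1, 4, -9, 16⟩⟩,
   ⟨⟨86, -151, 234, -335, 454, -591⟩,
    ⟨-87, 160, -255, 372, -511, 672⟩,
    ⟨228, -400, 620, -888, 1204, -1568⟩,
    ⟨-96, 176, -280, 408, -560, 736⟩,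
    ⟨70, -121, 186, -265, 358, -465⟩,
    ⟨-9, 16, -25, 36, -49, 64⟩⟩,
   ⟨⟨368, -440, 512, -584, 656, -728⟩,
    ⟨-424, 512, -600, 688, -776, 864⟩,
    ⟨976, -1168, 1360, -1552, 1744, -1936⟩,
    ⟨-464, 560, -656, 752, -848, 944⟩,
    ⟨288, -344, 400, -456, 512, -568⟩,
    ⟨-40, 48, -56, 64, -72, 80⟩⟩,
   ⟨⟨288, -288, 288, -288, 288, -288⟩,
    ⟨-352, 352, -352, 352, -352, 352⟩,
    ⟨768, -768, 768, -768, 768, -768⟩,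
    ⟨-384, 384, -384, 384, -384, 384⟩,
    ⟨224, -224, 224, -224, 224, -224⟩,
    ⟨-32, 32, -32, 32, -32, 32⟩⟩,
   ⟨⟨0, 0, -10, 39, -86, -2753⟩,
    ⟨0, 0, 8, -36, 87, 2604⟩,
    ⟨0, 0, -28, 105, -228, -7408⟩,
    ⟨1, 0, 8, -40, 97, 2872⟩,
    ⟨0, 1, -10, 33, -70, -2382⟩,
    ⟨0, 0, 1, -4, 9, 284⟩⟩,
   ⟨⟨-86, 151, -234, 335, -454, -31089⟩,
    ⟨87, -160, 255, -372, 511, 34080⟩,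
    ⟨-228, 400, -620, 888, -1204, -82400⟩,
    ⟨96, -176, 280, -408, 560, 37408⟩,
    ⟨-70, 121, -186, 265, -358, -24687⟩,
    ⟨9, -16, 25, -36, 49, 3328⟩⟩,
   ⟨⟨-368, 440, -512, 584, -656, -64808⟩,
    ⟨424, -512, 600, -688, 776, 75936⟩,
    ⟨-976, 1168, -1360, 1552, -1744, -172144⟩,
    ⟨464, -560, 656, -752, 848, 83024⟩,
    ⟨-288, 344, -400, 456, -512, -50632⟩,
    ⟨40, -48, 56, -64, 72, 7088⟩⟩,
   ⟨⟨-288, 288, -288, 288, -288, -36576⟩,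
    ⟨352, -352, 352, -352, 352, 44704⟩,
    ⟨-768, 768, -768, 768, -768, -97536⟩,
    ⟨384, -384, 384, -384, 384, 48768⟩,
    ⟨-224, 224, -224, 224, -224, -28448⟩,
    ⟨32, -32, 32, -32, 32, 4064⟩⟩,
   ⟨⟨0, -10, 39, -86, 151, -244⟩,
    ⟨0, 8, -36, 87, -160, 263⟩,
    ⟨0, -28, 105, -228, 400, -648⟩,
    ⟨0, 8, -40, 97, -176, 288⟩,
    ⟨1, -10, 33, -70, 122, -196⟩,
    ⟨0, 1, -4, 9, -16, 26⟩⟩,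
   ⟨⟨151, -234, 335, -454, 591, -746⟩,
    ⟨-160, 255, -372, 511, -672, 855⟩,
    ⟨400, -620, 888, -1204, 1568, -1980⟩,
    ⟨-176, 280, -408, 560, -736, 936⟩,
    ⟨121, -186, 265, -358, 465, -586⟩,
    ⟨-16, 25, -36, 49, -64, 81⟩⟩,
   ⟨⟨440, -512, 584, -656, 728, -800⟩,
    ⟨-512, 600, -688, 776, -864, 952⟩,
    ⟨1168, -1360, 1552, -1744, 1936, -2128⟩,
    ⟨-560, 656, -752, 848, -944, 1040⟩,
    ⟨344, -400, 456, -512, 568, -624⟩,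
    ⟨-48, 56, -64, 72, -80, 88⟩⟩,
   ⟨⟨288, -288, 288, -288, 288, -288⟩,
    ⟨-352, 352, -352, 352, -352, 352⟩,
    ⟨768, -768, 768, -768, 768, -768⟩,
    ⟨-384, 384, -384, 384, -384, 384⟩,
    ⟨224, -224, 224, -224, 224, -224⟩,
    ⟨-32, 32, -32, 32, -32, 32⟩⟩,
   ⟨⟨0, 10, -39, 86, -151, -6496⟩,
    ⟨0, -8, 36, -87, 160, 6473⟩,
    ⟨0, 28, -105, 228, -400, -17328⟩,
    ⟨0, -8, 40, -97, 176, 7152⟩,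
    ⟨-1, 10, -33, 70, -122, -5392⟩,
    ⟨0, -1, 4, -9, 16, 678⟩⟩,
   ⟨⟨-151, 234, -335, 454, -591, -43862⟩,
    ⟨160, -255, 372, -511, 672, 48873⟩,
    ⟨-400, 620, -888, 1204, -1568, -116292⟩,
    ⟨176, -280, 408, -560, 736, 53592⟩,
    ⟨-121, 186, -265, 358, -465, -34678⟩,
    ⟨16, -25, 36, -49, 64, 4719⟩⟩,
   ⟨⟨-440, 512, -584, 656, -728, -73952⟩,
    ⟨512, -600, 688, -776, 864, 87112⟩,
    ⟨-1168, 1360, -1552, 1744, -1936, -196528⟩,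
    ⟨560, -656, 752, -848, 944, 95216⟩,
    ⟨-344, 400, -456, 512, -568, -57744⟩,
    ⟨48, -56, 64, -72, 80, 8104⟩⟩,
   ⟨⟨-288, 288, -288, 288, -288, -36576⟩,
    ⟨352, -352, 352, -352, 352, 44704⟩,
    ⟨-768, 768, -768, 768, -768, -97536⟩,
    ⟨384, -384, 384, -384, 384, 48768⟩,
    ⟨-224, 224, -224, 224, -224, -28448⟩,
    ⟨32, -32, 32, -32, 32, 4064⟩⟩,
   ⟨⟨10, -39, 86, -151, 244, -374⟩,
    ⟨-8, 36, -87, 160, -263, 408⟩,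
    ⟨28, -105, 228, -400, 648, -993⟩,
    ⟨-8, 40, -97, 176, -288, 448⟩,
    ⟨10, -33, 70, -122, 196, -298⟩,
    ⟨-1, 4, -9, 16, -26, 40⟩⟩,
   ⟨⟨234, -335, 454, -591, 746, -919⟩,
    ⟨-255, 372, -511, 672, -855, 1060⟩,
    ⟨620, -888, 1204, -1568, 1980, -2440⟩,
    ⟨-280, 408, -560, 736, -936, 1160⟩,
    ⟨186, -265, 358, -465, 586, -721⟩,
    ⟨-25, 36, -49, 64, -81, 100⟩⟩,
   ⟨⟨512, -584, 656, -728, 800, -872⟩,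
    ⟨-600, 688, -776, 864, -952, 1040⟩,
    ⟨1360, -1552, 1744, -1936, 2128, -2320⟩,
    ⟨-656, 752, -848, 944, -1040, 1136⟩,
    ⟨400, -456, 512, -568, 624, -680⟩,
    ⟨-56, 64, -72, 80, -88, 96⟩⟩,
   ⟨⟨288, -288, 288, -288, 288, -288⟩,
    ⟨-352, 352, -352, 352, -352, 352⟩,
    ⟨768, -768, 768, -768, 768, -768⟩,
    ⟨-384, 384, -384, 384, -384, 384⟩,
    ⟨224, -224, 224, -224, 224, -224⟩,
    ⟨-32, 32, -32, 32, -32, 32⟩⟩,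
   ⟨⟨-10, 39, -86, 151, -244, -12562⟩,
    ⟨8, -36, 87, -160, 263, 13020⟩,
    ⟨-28, 105, -228, 400, -648, -33375⟩,
    ⟨8, -40, 97, -176, 288, 14360⟩,
    ⟨-10, 33, -70, 122, -196, -10222⟩,
    ⟨1, -4, 9, -16, 26, 1324⟩⟩,
   ⟨⟨-234, 335, -454, 591, -746, -58921⟩,
    ⟨255, -372, 511, -672, 855, 66460⟩,
    ⟨-620, 888, -1204, 1568, -1980, -156280⟩,
    ⟨280, -408, 560, -736, 936, 72824⟩,
    ⟨-186, 265, -358, 465, -586, -46447⟩,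
    ⟨25, -36, 49, -64, 81, 6364⟩⟩,
   ⟨⟨-512, 584, -656, 728, -800, -83096⟩,
    ⟨600, -688, 776, -864, 952, 98288⟩,
    ⟨-1360, 1552, -1744, 1936, -2128, -220912⟩,
    ⟨656, -752, 848, -944, 1040, 107408⟩,
    ⟨-400, 456, -512, 568, -624, -64856⟩,
    ⟨56, -64, 72, -80, 88, 9120⟩⟩,
   ⟨⟨-288, 288, -288, 288, -288, -36576⟩,
    ⟨352, -352, 352, -352, 352, 44704⟩,
    ⟨-768, 768, -768, 768, -768, -97536⟩,
    ⟨384, -384, 384, -384, 384, 48768⟩,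
    ⟨-224, 224, -224, 224, -224, -28448⟩,
    ⟨32, -32, 32, -32, 32, 4064⟩⟩]

def tM : M6 :=
   ⟨⟨1, 0, 0, 0, 0, -10⟩,
    ⟨0, 1, 0, 0, 0, 8⟩,
    ⟨0, 0, 1, 0, 0, -28⟩,
    ⟨0, 0, 0, 1, 0, 8⟩,
    ⟨0, 0, 0, 0, 1, -10⟩,
    ⟨0, 0, 0, 0, 0, 1⟩⟩

def uM : M6 :=
   ⟨⟨-1, 0, 0, 0, 0, -10⟩,
    ⟨0, -1, 0, 0, 0, 8⟩,
    ⟨0, 0, -1, 0, 0, -28⟩,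
    ⟨0, 0, 0, -1, 0, 8⟩,
    ⟨0, 0, 0, 0, -1, -10⟩,
    ⟨0, 0, 0, 0, 0, -1⟩⟩

def rM : M6 :=
   ⟨⟨0, 0, 0, 0, -10, -61⟩,
    ⟨1, 0, 0, 0, 8, 54⟩,
    ⟨0, 1, 0, 0, -28, -183⟩,
    ⟨0, 0, 1, 0, 8, 68⟩,
    ⟨0, 0, 0, 1, -10, -75⟩,
    ⟨0, 0, 0, 0, 1, 6⟩⟩

def sM : M6 :=
   ⟨⟨0, 0, 0, 0, 10, 61⟩,
    ⟨-1, 0, 0, 0, -8, -54⟩,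
    ⟨0, -1, 0, 0, 28, 183⟩,
    ⟨0, 0, -1, 0, -8, -68⟩,
    ⟨0, 0, 0, -1, 10, 75⟩,
    ⟨0, 0, 0, 0, -1, -6⟩⟩

def nM : M6 :=
   ⟨⟨-1, -10, 39, -86, 151, 3126⟩,
    ⟨0, 7, -36, 87, -160, -3105⟩,
    ⟨0, -28, 104, -228, 400, 8340⟩,
    ⟨0, 8, -40, 96, -176, -3432⟩,
    ⟨1, -10, 33, -70, 121, 2598⟩,
    ⟨0, 1, -4, 9, -16, -327⟩⟩

def eM : M6 :=
   ⟨⟨0, 0, 0, 0, -1, -16⟩,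
    ⟨0, 0, 0, -1, 0, 23⟩,
    ⟨0, 0, -1, 0, 0, -48⟩,
    ⟨0, -1, 0, 0, 0, 23⟩,
    ⟨-1, 0, 0, 0, 0, -16⟩,
    ⟨0, 0, 0, 0, 0, 1⟩⟩

def naM : M6 :=
   ⟨⟨-1, 0, 0, 0, -10, -161⟩,
    ⟨1, -1, 0, 0, 8, 144⟩,
    ⟨0, 1, -1, 0, -28, -471⟩,
    ⟨0, 0, 1, -1, 8, 176⟩,
    ⟨0, 0, 0, 1, -11, -183⟩,
    ⟨0, 0, 0, 0, 1, 15⟩⟩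

def wM : M6 :=
   ⟨⟨0, 0, 0, 0, 0, -10⟩,
    ⟨0, 0, 0, 0, 0, 8⟩,
    ⟨0, 0, 0, 0, 0, -28⟩,
    ⟨0, 0, 0, 0, 0, 8⟩,
    ⟨0, 0, 0, 0, 0, -10⟩,
    ⟨0, 0, 0, 0, 0, 0⟩⟩

def riM : M6 :=
   ⟨⟨6, 1, 0, 0, 0, 52⟩,
    ⟨-15, 0, 1, 0, 0, -122⟩,
    ⟨20, 0, 0, 1, 0, 192⟩,
    ⟨-15, 0, 0, 0, 1, -140⟩,
    ⟨6, 0, 0, 0, 0, 61⟩,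
    ⟨-1, 0, 0, 0, 0, -10⟩⟩

/-- Boolean sign test. -/
def nn : ℤ → Bool
  | Int.ofNat _ => true
  | Int.negSucc _ => false

theorem nn_spec {x : ℤ} (h : nn x = true) : 0 ≤ x := by
  cases x with
  | ofNat n => exact Int.natCast_nonneg n
  | negSucc n => simp [nn] at h

def Spx.has (s : Spx) (y : V6) : Bool :=
  nn (s.adj.a.dot y) && (nn (s.adj.b.dot y) && (nn (s.adj.c.dot y) && (nn (s.adj.d.dot y) &&
    (nn (s.adj.e.dot y) && nn (s.adj.f.dot y)))))

def Spx.good (s : Spx) : Bool :=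
  decide (0 < s.d) && (decide (s.q.tr.mul s.adj = M6.one.smul s.d) &&
    [s.q.a, s.q.b, s.q.c, s.q.d, s.q.e, s.q.f].all (fun v => decide (v ∈ gens)))

theorem simps_good : simps.all Spx.good = true := by decide +kernel

def covered (M : M6) : Bool := gens.all (fun v => simps.any (fun s => s.has (M.app v)))

theorem mats_covered : mats.all covered = true := by decide +kernel

/-- Membership in the (saturated) cone generated by `gens`. -/
inductive Cone : (Fin 6 → ℤ) → Prop
  | gen (v : V6) (h : v ∈ gens) : Cone v.vec
  | zero : Cone 0
  | add (x y : Fin 6 → ℤ) : Cone x → Cone y → Cone (x + y)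
  | div (n : ℕ) (x : Fin 6 → ℤ) : 0 < n → Cone ((n : ℤ) • x) → Cone x

theorem Cone.nsmul {x : Fin 6 → ℤ} (h : Cone x) (n : ℕ) : Cone ((n : ℤ) • x) := by
  induction n with
  | zero => simpa using Cone.zero
  | succ n ih =>
    have := Cone.add _ _ ih h
    convert this using 1
    push_cast
    rw [add_smul, one_smul]

theorem Cone.zsmul {x : Fin 6 → ℤ} (h : Cone x) {n : ℤ} (hn : 0 ≤ n) : Cone (n • x) := by
  obtain ⟨m, rfl⟩ := Int.eq_ofNat_of_zero_le hn
  exact h.nsmul m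

theorem Cone.zdiv {x : Fin 6 → ℤ} {n : ℤ} (hn : 0 < n) (h : Cone (n • x)) : Cone x := by
  obtain ⟨m, rfl⟩ := Int.eq_ofNat_of_zero_le hn.le
  exact Cone.div m x (by exact_mod_cast hn) h

/-- A matrix preserving the cone. -/
def Pres (M : Matrix (Fin 6) (Fin 6) ℤ) : Prop := ∀ x, Cone x → Cone (M *ᵥ x)

theorem Pres.of_gens {M : Matrix (Fin 6) (Fin 6) ℤ} (h : ∀ v ∈ gens, Cone (M *ᵥ v.vec)) :
    Pres M := by
  intro x hx
  induction hx with
  | gen v hv => exact h v hv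
  | zero => simpa using Cone.zero
  | add x y _ _ ihx ihy =>
    rw [Matrix.mulVec_add]
    exact Cone.add _ _ ihx ihy
  | div n x hn _ ih =>
    rw [Matrix.mulVec_smul] at ih
    exact Cone.div n _ hn ih

theorem Cone.nonneg {x : Fin 6 → ℤ} (hx : Cone x) (l : Fin 6 → ℤ)
    (h : ∀ v ∈ gens, 0 ≤ l ⬝ᵥ v.vec) : 0 ≤ l ⬝ᵥ x := by
  induction hx with
  | gen v hv => exact h v hv
  | zero => simp
  | add x y _ _ ihx ihy =>
    rw [dotProduct_add]
    exact add_nonneg ihx ihy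
  | div n x hn _ ih =>
    rw [dotProduct_smul, smul_eq_mul] at ih
    exact nonneg_of_mul_nonneg_right ih (by exact_mod_cast hn)

theorem V6.dot_spec (v w : V6) : v.vec ⬝ᵥ w.vec = v.dot w := by
  simp [V6.vec, V6.dot, dotProduct, Fin.sum_univ_six]

theorem M6.app_tr (q : M6) (y : V6) : (q.tr.app y).vec =
    y.a • q.a.vec + y.b • q.b.vec + y.c • q.c.vec + y.d • q.d.vec + y.e • q.e.vec
      + y.f • q.f.vec := by
  ext i
  fin_cases i <;> simp [M6.tr, M6.app, V6.vec, V6.dot] <;> ring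

theorem Spx.cone {s : Spx} (hs : s ∈ simps) {y : V6} (hy : s.has y = true) : Cone y.vec := by
  have hg : s.good = true := List.all_eq_true.mp simps_good s hs
  simp only [Spx.good, Bool.and_eq_true, decide_eq_true_eq, List.all_cons, List.all_nil,
    and_true] at hg
  obtain ⟨hd, hm, h1, h2, h3, h4, h5, h6⟩ := hg
  simp only [Spx.has, Bool.and_eq_true] at hy
  obtain ⟨g1, g2, g3, g4, g5, g6⟩ := hy
  have hm' := congrArg M6.mat hm
  rw [M6.mat_mul, M6.mat_smul, M6.mat_one] at hm'
  have key : (s.q.tr.app (s.adj.app y)).vec = s.d • y.vec := by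
    rw [← M6.mat_app, ← M6.mat_app, Matrix.mulVec_mulVec, hm', Matrix.smul_mulVec,
      Matrix.one_mulVec]
  refine Cone.zdiv hd ?_
  rw [← key, M6.app_tr]
  refine Cone.add _ _ (Cone.add _ _ (Cone.add _ _ (Cone.add _ _ (Cone.add _ _ ?_ ?_) ?_) ?_) ?_) ?_
  · exact (Cone.gen _ h1).zsmul (nn_spec g1)
  · exact (Cone.gen _ h2).zsmul (nn_spec g2)
  · exact (Cone.gen _ h3).zsmul (nn_spec g3)
  · exact (Cone.gen _ h4).zsmul (nn_spec g4)
  · exact (Cone.gen _ h5).zsmul (nn_spec g5)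
  · exact (Cone.gen _ h6).zsmul (nn_spec g6)

theorem pres_mats {M : M6} (hM : M ∈ mats) : Pres M.mat := by
  refine Pres.of_gens fun v hv => ?_
  rw [M6.mat_app]
  have h := List.all_eq_true.mp (List.all_eq_true.mp mats_covered M hM) v hv
  obtain ⟨s, hs, h⟩ := List.any_eq_true.mp h
  exact Spx.cone hs h

/-- The two functionals. -/
def lfp : V6 := ⟨1, 0, 0, 0, 1, 26⟩
def lfm : V6 := ⟨-1, 0, 0, 0, -1, -6⟩

theorem lp_gens : ∀ v ∈ gens, 0 ≤ lfp.dot v := by decide +kernel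
theorem lm_gens : ∀ v ∈ gens, 0 ≤ lfm.dot v := by decide +kernel

theorem Cone.lfp {x : Fin 6 → ℤ} (hx : Cone x) : 0 ≤ lfp.vec ⬝ᵥ x :=
  hx.nonneg _ fun v hv => by rw [V6.dot_spec]; exact lp_gens v hv

theorem Cone.lfm {x : Fin 6 → ℤ} (hx : Cone x) : 0 ≤ lfm.vec ⬝ᵥ x :=
  hx.nonneg _ fun v hv => by rw [V6.dot_spec]; exact lm_gens v hv

/-- Interior part of the cone, used in the ping-pong argument. -/
def Pos (x : Fin 6 → ℤ) : Prop := Cone x ∧ 0 < lfp.vec ⬝ᵥ x ∧ 0 < lfm.vec ⬝ᵥ x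

theorem Pos.add_cone {x y : Fin 6 → ℤ} (hx : Pos x) (hy : Cone y) : Pos (x + y) := by
  refine ⟨Cone.add _ _ hx.1 hy, ?_, ?_⟩
  · rw [dotProduct_add]
    exact add_pos_of_pos_of_nonneg hx.2.1 hy.lfp
  · rw [dotProduct_add]
    exact add_pos_of_pos_of_nonneg hx.2.2 hy.lfm

theorem Pos.zsmul {x : Fin 6 → ℤ} (hx : Pos x) {n : ℤ} (hn : 0 < n) : Pos (n • x) := by
  refine ⟨hx.1.zsmul hn.le, ?_, ?_⟩
  · rw [dotProduct_smul]
    exact mul_pos hn hx.2.1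
  · rw [dotProduct_smul]
    exact mul_pos hn hx.2.2

theorem Pos.zdiv {x : Fin 6 → ℤ} {n : ℤ} (hn : 0 < n) (hx : Pos (n • x)) : Pos x := by
  obtain ⟨h1, h2, h3⟩ := hx
  rw [dotProduct_smul, smul_eq_mul] at h2 h3
  exact ⟨h1.zdiv hn, pos_of_mul_pos_right h2 hn.le, pos_of_mul_pos_right h3 hn.le⟩

/-- A matrix whose functionals do not decrease on generators. -/
def mono (M : M6) : Bool :=
  gens.all fun v => nn (lfp.dot (M.app v) + (-1) * lfp.dot v) &&
    nn (lfm.dot (M.app v) + (-1) * lfm.dot v)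

theorem pos_of_mono {M : M6} (h1 : M ∈ mats) (h2 : mono M = true) {x : Fin 6 → ℤ} (hx : Pos x) :
    Pos (M.mat *ᵥ x) := by
  have h2' := List.all_eq_true.mp h2
  refine ⟨pres_mats h1 _ hx.1, ?_, ?_⟩
  · have := hx.1.nonneg (lfp.vec ᵥ* M.mat - lfp.vec) fun v hv => by
      have := h2' v hv
      rw [Bool.and_eq_true] at this
      have := nn_spec this.1
      rw [sub_dotProduct, ← Matrix.dotProduct_mulVec, M6.mat_app, V6.dot_spec, V6.dot_spec]
      linarith
    rw [sub_dotProduct, ← Matrix.dotProduct_mulVec] at this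
    linarith [hx.2.1]
  · have := hx.1.nonneg (lfm.vec ᵥ* M.mat - lfm.vec) fun v hv => by
      have := h2' v hv
      rw [Bool.and_eq_true] at this
      have := nn_spec this.2
      rw [sub_dotProduct, ← Matrix.dotProduct_mulVec, M6.mat_app, V6.dot_spec, V6.dot_spec]
      linarith
    rw [sub_dotProduct, ← Matrix.dotProduct_mulVec] at this
    linarith [hx.2.2]

/-- All the multiples by powers of `N` preserve the cone. -/
structure Good (M : Matrix (Fin 6) (Fin 6) ℤ) : Prop where
  p0 : ∀ x, Pos x → Pos (M *ᵥ x)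
  p1 : Pres (nM.mat * M)
  p2 : Pres (nM.mat * (nM.mat * M))
  p3 : Pres (nM.mat * (nM.mat * (nM.mat * M)))

theorem Pres.add {M N : Matrix (Fin 6) (Fin 6) ℤ} (hM : Pres M) (hN : Pres N) : Pres (M + N) := by
  intro x hx
  rw [Matrix.add_mulVec]
  exact Cone.add _ _ (hM x hx) (hN x hx)

theorem n4 : nM.mat * (nM.mat * (nM.mat * nM.mat)) = 0 := by
  have : nM.mul (nM.mul (nM.mul nM)) = M6.one.smul 0 := by decide +kernel
  rw [← M6.mat_mul, ← M6.mat_mul, ← M6.mat_mul, this, M6.mat_smul, zero_smul]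

theorem s4 : sM.mat ^ 4 = 1 + nM.mat := by
  have : sM.mul (sM.mul (sM.mul sM)) = M6.one.add nM := by decide +kernel
  have h := congrArg M6.mat this
  rw [M6.mat_mul, M6.mat_mul, M6.mat_mul, M6.mat_add, M6.mat_one] at h
  rw [← h]
  noncomm_ring

theorem Good.step {M : Matrix (Fin 6) (Fin 6) ℤ} (h : Good M) : Good (sM.mat ^ 4 * M) := by
  rw [s4, add_mul, one_mul]
  refine ⟨?_, ?_, ?_, ?_⟩
  · intro x hx
    rw [Matrix.add_mulVec]
    exact (h.p0 x hx).add_cone (h.p1 x hx.1)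
  · rw [mul_add]
    exact h.p1.add h.p2
  · rw [mul_add, mul_add]
    exact h.p2.add h.p3
  · rw [mul_add, mul_add, mul_add]
    refine h.p3.add ?_
    have : nM.mat * (nM.mat * (nM.mat * (nM.mat * M))) = 0 := by
      have h4 := congrArg (· * M) n4
      simpa only [Matrix.mul_assoc, zero_mul, Matrix.zero_mul] using h4
    rw [this]
    intro x _
    simpa using Cone.zero

theorem good_of (M : M6) (h0 : M ∈ mats) (hm : mono M = true) (h1 : nM.mul M ∈ mats)
    (h2 : nM.mul (nM.mul M) ∈ mats) (h3 : nM.mul (nM.mul (nM.mul M)) ∈ mats) : Good M.mat := by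
  refine ⟨fun x hx => pos_of_mono h0 hm hx, ?_, ?_, ?_⟩
  · simpa only [M6.mat_mul] using pres_mats h1
  · simpa only [M6.mat_mul] using pres_mats h2
  · simpa only [M6.mat_mul] using pres_mats h3

def sPow : ℕ → M6
  | 0 => M6.one
  | n + 1 => sM.mul (sPow n)

theorem sPow_mat (n : ℕ) : (sPow n).mat = sM.mat ^ n := by
  induction n with
  | zero => rw [sPow, M6.mat_one, pow_zero]
  | succ n ih => rw [sPow, M6.mat_mul, ih, pow_succ']

theorem good_base_t : ∀ k ∈ [2, 3, 4, 5], Good (sM.mat ^ k * tM.mat) := by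
  have h : ∀ k ∈ [2, 3, 4, 5], (sPow k).mul tM ∈ mats ∧ mono ((sPow k).mul tM) = true ∧
      nM.mul ((sPow k).mul tM) ∈ mats ∧ nM.mul (nM.mul ((sPow k).mul tM)) ∈ mats ∧
      nM.mul (nM.mul (nM.mul ((sPow k).mul tM))) ∈ mats := by decide +kernel
  intro k hk
  obtain ⟨h0, h1, h2, h3, h4⟩ := h k hk
  rw [← sPow_mat, ← M6.mat_mul]
  exact good_of _ h0 h1 h2 h3 h4

theorem good_base_u : ∀ k ∈ [2, 3, 4, 5], Good (sM.mat ^ k * uM.mat) := by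
  have h : ∀ k ∈ [2, 3, 4, 5], (sPow k).mul uM ∈ mats ∧ mono ((sPow k).mul uM) = true ∧
      nM.mul ((sPow k).mul uM) ∈ mats ∧ nM.mul (nM.mul ((sPow k).mul uM)) ∈ mats ∧
      nM.mul (nM.mul (nM.mul ((sPow k).mul uM))) ∈ mats := by decide +kernel
  intro k hk
  obtain ⟨h0, h1, h2, h3, h4⟩ := h k hk
  rw [← sPow_mat, ← M6.mat_mul]
  exact good_of _ h0 h1 h2 h3 h4

theorem good_all (L : Matrix (Fin 6) (Fin 6) ℤ) (h : ∀ k ∈ [2, 3, 4, 5], Good (sM.mat ^ k * L)) :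
    ∀ k, Good (sM.mat ^ (k + 2) * L)
  | 0 => h 2 (by simp)
  | 1 => h 3 (by simp)
  | 2 => h 4 (by simp)
  | 3 => h 5 (by simp)
  | k + 4 => by
    have := (good_all L h k).step
    rwa [← Matrix.mul_assoc, ← pow_add, show 4 + (k + 2) = k + 4 + 2 by ring] at this

theorem pos_t (k : ℕ) {x : Fin 6 → ℤ} (hx : Pos x) :
    Pos ((sM.mat ^ (k + 1) * tM.mat) *ᵥ x) := by
  cases k with
  | zero =>
    have h : sM.mul tM ∈ mats ∧ mono (sM.mul tM) = true := by decide +kernel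
    have := pos_of_mono h.1 h.2 hx
    rw [M6.mat_mul] at this
    simpa using this
  | succ k => exact (good_all _ good_base_t k).p0 x hx

theorem pos_u (k : ℕ) {x : Fin 6 → ℤ} (hx : Pos x) :
    Pos ((sM.mat ^ (k + 1) * uM.mat) *ᵥ x) := by
  cases k with
  | zero =>
    have h : naM ∈ mats ∧ sM.mul uM = M6.one.add naM := by decide +kernel
    have h2 := congrArg M6.mat h.2
    rw [M6.mat_mul, M6.mat_add, M6.mat_one] at h2
    rw [zero_add, pow_one, h2, Matrix.add_mulVec, Matrix.one_mulVec]
    exact hx.add_cone (pres_mats h.1 x hx.1)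
  | succ k => exact (good_all _ good_base_u k).p0 x hx

theorem pos_e {x : Fin 6 → ℤ} (hx : Pos x) : Pos (eM.mat *ᵥ x) := by
  have h : ∀ v ∈ gens, eM.app v ∈ gens := by decide +kernel
  have hp : Pres eM.mat := Pres.of_gens fun v hv => by
    rw [M6.mat_app]
    exact Cone.gen _ (h v hv)
  have h1 : lfp.vec ᵥ* eM.mat = lfm.vec := by
    have : eM.tr.app lfp = lfm := by decide +kernel
    rw [← this, ← M6.mat_app, M6.mat_tr, Matrix.mulVec_transpose]
  have h2 : lfm.vec ᵥ* eM.mat = lfp.vec := by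
    have : eM.tr.app lfm = lfp := by decide +kernel
    rw [← this, ← M6.mat_app, M6.mat_tr, Matrix.mulVec_transpose]
  refine ⟨hp x hx.1, ?_, ?_⟩
  · rw [Matrix.dotProduct_mulVec, h1]
    exact hx.2.2
  · rw [Matrix.dotProduct_mulVec, h2]
    exact hx.2.1

theorem pos_nonempty : ∃ x, Pos x := by
  have h : ∃ v ∈ gens, 0 < lfp.dot v ∧ 0 < lfm.dot v := by decide +kernel
  obtain ⟨v, hv, h1, h2⟩ := h
  refine ⟨v.vec, Cone.gen v hv, ?_, ?_⟩
  · rwa [V6.dot_spec]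
  · rwa [V6.dot_spec]

/-- Positive up to sign. -/
def SPos (x : Fin 6 → ℤ) : Prop := Pos x ∨ Pos (-x)

theorem SPos.neg {x : Fin 6 → ℤ} (h : SPos x) : SPos (-x) := by
  rcases h with h | h
  · exact Or.inr (by rwa [neg_neg])
  · exact Or.inl h

theorem w_rel_t : tM.mat = 1 + wM.mat := by
  rw [show tM = M6.one.add wM by decide +kernel, M6.mat_add, M6.mat_one]

theorem w_rel_u : uM.mat = wM.mat - 1 := by
  rw [show uM = wM.add (M6.one.smul (-1)) by decide +kernel, M6.mat_add, M6.mat_smul, M6.mat_one,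
    neg_one_smul, sub_eq_add_neg]

theorem w_sq : wM.mat * wM.mat = 0 := by
  rw [← M6.mat_mul, show wM.mul wM = M6.one.smul 0 by decide +kernel, M6.mat_smul, zero_smul]

theorem r_neg_s : rM.mat = - sM.mat := by
  rw [show rM = sM.smul (-1) by decide +kernel, M6.mat_smul, neg_one_smul]

theorem spos_s (k : ℕ) {n : ℤ} (hn : n ≠ 0) {x : Fin 6 → ℤ} (hx : Pos x) :
    SPos ((sM.mat ^ (k + 1) * (1 + n • wM.mat)) *ᵥ x) := by
  have hp := pos_t k hx
  have hu := pos_u k hx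
  rw [w_rel_t] at hp
  rw [w_rel_u] at hu
  have key : (2 : ℤ) • ((sM.mat ^ (k + 1) * (1 + n • wM.mat)) *ᵥ x) =
      (n + 1) • ((sM.mat ^ (k + 1) * (1 + wM.mat)) *ᵥ x) +
      (n - 1) • ((sM.mat ^ (k + 1) * (wM.mat - 1)) *ᵥ x) := by
    rw [← Matrix.smul_mulVec, ← Matrix.smul_mulVec, ← Matrix.smul_mulVec, ← Matrix.add_mulVec]
    congr 1
    rw [← mul_smul_comm, ← mul_smul_comm, ← mul_smul_comm, ← mul_add]
    congr 1
    module
  rcases lt_or_gt_of_ne hn with h | h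
  · right
    refine Pos.zdiv (n := 2) (by norm_num) ?_
    rw [smul_neg, key, neg_add, ← neg_smul, ← neg_smul, add_comm]
    exact (hu.zsmul (by linarith)).add_cone (hp.1.zsmul (by linarith))
  · left
    refine Pos.zdiv (n := 2) (by norm_num) ?_
    rw [key]
    exact (hp.zsmul (by linarith)).add_cone (hu.1.zsmul (by linarith))

theorem spos_r (k : ℕ) {n : ℤ} (hn : n ≠ 0) {x : Fin 6 → ℤ} (hx : SPos x) :
    SPos ((rM.mat ^ (k + 1) * (1 + n • wM.mat)) *ᵥ x) := by
  have h1 : ∀ y, Pos y → SPos ((rM.mat ^ (k + 1) * (1 + n • wM.mat)) *ᵥ y) := by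
    intro y hy
    have := spos_s k hn hy
    rw [r_neg_s, neg_pow]
    rcases neg_one_pow_eq_or (Matrix (Fin 6) (Fin 6) ℤ) (k + 1) with h | h
    · rwa [h, one_mul]
    · rw [h, neg_one_mul, neg_mul, Matrix.neg_mulVec]
      exact this.neg
  rcases hx with h | h
  · exact h1 x h
  · have := (h1 _ h).neg
    rwa [Matrix.mulVec_neg, neg_neg] at this

theorem spos_e {x : Fin 6 → ℤ} (hx : SPos x) : SPos (eM.mat *ᵥ x) := by
  rcases hx with h | h
  · exact Or.inl (pos_e h)
  · have := pos_e h
    rw [Matrix.mulVec_neg] at this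
    exact Or.inr this

theorem spos_disj {n : ℤ} (hn : n ≠ 0) {x : Fin 6 → ℤ} (hx : SPos x)
    (h : SPos ((1 + n • wM.mat) *ᵥ x)) : False := by
  have e1 : lfp.vec ᵥ* wM.mat = -(lfp.vec + lfm.vec) := by
    have h1 : wM.tr.app lfp = (lfp.add lfm).smul (-1) := by decide +kernel
    rw [← Matrix.mulVec_transpose, ← M6.mat_tr, M6.mat_app, h1]
    ext i
    fin_cases i <;> rfl
  have e2 : lfm.vec ᵥ* wM.mat = lfp.vec + lfm.vec := by
    have h1 : wM.tr.app lfm = lfp.add lfm := by decide +kernel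
    rw [← Matrix.mulVec_transpose, ← M6.mat_tr, M6.mat_app, h1]
    ext i
    fin_cases i <;> rfl
  have f1 : lfp.vec ⬝ᵥ ((1 + n • wM.mat) *ᵥ x) =
      lfp.vec ⬝ᵥ x - n * (lfp.vec ⬝ᵥ x + lfm.vec ⬝ᵥ x) := by
    rw [Matrix.add_mulVec, Matrix.one_mulVec, dotProduct_add, Matrix.smul_mulVec, dotProduct_smul,
      Matrix.dotProduct_mulVec, e1, neg_dotProduct, add_dotProduct, smul_eq_mul]
    ring
  have f2 : lfm.vec ⬝ᵥ ((1 + n • wM.mat) *ᵥ x) =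
      lfm.vec ⬝ᵥ x + n * (lfp.vec ⬝ᵥ x + lfm.vec ⬝ᵥ x) := by
    rw [Matrix.add_mulVec, Matrix.one_mulVec, dotProduct_add, Matrix.smul_mulVec, dotProduct_smul,
      Matrix.dotProduct_mulVec, e2, add_dotProduct, smul_eq_mul]
  have g : ∀ y, SPos y → (0 < lfp.vec ⬝ᵥ y ∧ 0 < lfm.vec ⬝ᵥ y) ∨
      (lfp.vec ⬝ᵥ y < 0 ∧ lfm.vec ⬝ᵥ y < 0) := by
    rintro y (hy | hy)
    · exact Or.inl hy.2
    · have := hy.2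
      simp only [dotProduct_neg, Left.neg_pos_iff] at this
      exact Or.inr this
  have g1 := g _ hx
  have g2 := g _ h
  rw [f1, f2] at g2
  generalize lfp.vec ⬝ᵥ x = a at *
  generalize lfm.vec ⬝ᵥ x = b at *
  rcases lt_or_gt_of_ne hn with h0 | h0
  · rcases g1 with ⟨g1, g1'⟩ | ⟨g1, g1'⟩
    · have : n * (a + b) ≤ -(a + b) := by nlinarith
      rcases g2 with g2 | g2 <;> linarith [g2.1, g2.2]
    · have : -(a + b) ≤ n * (a + b) := by nlinarith
      rcases g2 with g2 | g2 <;> linarith [g2.1, g2.2]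
  · rcases g1 with ⟨g1, g1'⟩ | ⟨g1, g1'⟩
    · have : (a + b) ≤ n * (a + b) := by nlinarith
      rcases g2 with g2 | g2 <;> linarith [g2.1, g2.2]
    · have : n * (a + b) ≤ (a + b) := by nlinarith
      rcases g2 with g2 | g2 <;> linarith [g2.1, g2.2]

/-- The involution `E` as an invertible matrix. -/
def eG : GL (Fin 6) ℤ := by
  have h : eM.mat * eM.mat = 1 := by
    rw [← M6.mat_mul, show eM.mul eM = M6.one by decide +kernel, M6.mat_one]
  exact ⟨eM.mat, eM.mat, h, h⟩

theorem eG_val : eG.val = eM.mat := rfl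

theorem eG_inv : eG⁻¹ = eG := by
  ext1
  rfl

theorem T_zpow {T : GL (Fin 6) ℤ} (hT : T.val = tM.mat) (n : ℤ) :
    (T ^ n).val = 1 + n • wM.mat := by
  have hi : (T⁻¹).val = 1 - wM.mat := by
    refine Units.inv_eq_of_mul_eq_one_right ?_
    rw [hT, w_rel_t]
    have : (1 + wM.mat) * (1 - wM.mat) = 1 - wM.mat * wM.mat := by noncomm_ring
    rw [this, w_sq, sub_zero]
  induction n using Int.induction_on with
  | zero => simp
  | succ i ih =>
    rw [_root_.zpow_add_one, Units.val_mul, ih, hT, w_rel_t, add_mul, one_mul, smul_mul_assoc, mul_add,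
      mul_one, w_sq, add_zero]
    module
  | pred i ih =>
    rw [_root_.zpow_sub_one, Units.val_mul, ih, hi, add_mul, one_mul, smul_mul_assoc, mul_sub,
      mul_one, w_sq, sub_zero]
    module

theorem spos_RT {T R : GL (Fin 6) ℤ} (hT : T.val = tM.mat) (hR : R.val = rM.mat) {k n : ℤ}
    (hk : k ≠ 0) (hn : n ≠ 0) {x : Fin 6 → ℤ} (hx : SPos x) :
    SPos ((R ^ k * T ^ n).val *ᵥ x) := by
  have hpos : ∀ (k : ℕ) (n : ℤ), n ≠ 0 → ∀ x, SPos x →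
      SPos ((R ^ (k + 1) * T ^ n).val *ᵥ x) := by
    intro k n hn x hx
    rw [Units.val_mul, T_zpow hT, Units.val_pow_eq_pow_val, hR]
    exact spos_r k hn hx
  have cR : eG * R * eG⁻¹ = R⁻¹ := by
    rw [eq_inv_iff_mul_eq_one, eG_inv]
    ext1
    rw [Units.val_mul, Units.val_mul, Units.val_mul, eG_val, hR, Units.val_one, ← M6.mat_one,
      ← M6.mat_mul, ← M6.mat_mul, ← M6.mat_mul]
    exact congrArg M6.mat (by decide +kernel)
  have cT : eG * T * eG⁻¹ = T⁻¹ := by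
    rw [eq_inv_iff_mul_eq_one, eG_inv]
    ext1
    rw [Units.val_mul, Units.val_mul, Units.val_mul, eG_val, hT, Units.val_one, ← M6.mat_one,
      ← M6.mat_mul, ← M6.mat_mul, ← M6.mat_mul]
    exact congrArg M6.mat (by decide +kernel)
  rcases lt_or_gt_of_ne hk with h | h
  · obtain ⟨m, hm⟩ : ∃ m : ℕ, k = -((m + 1 : ℕ) : ℤ) := ⟨(-k - 1).toNat, by omega⟩
    have key : R ^ k * T ^ n = eG * (R ^ (m + 1) * T ^ (-n)) * eG := by
      have h1 : R ^ k = eG * R ^ (m + 1) * eG⁻¹ := by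
        rw [← conj_pow, cR, hm, _root_.zpow_neg, zpow_natCast, inv_pow]
      have h2 : T ^ n = eG * T ^ (-n) * eG⁻¹ := by
        rw [← conj_zpow, cT, _root_.inv_zpow', neg_neg]
      rw [h1, h2]
      have h3 : eG * (R ^ (m + 1) * T ^ (-n)) * eG = eG * (R ^ (m + 1) * T ^ (-n)) * eG⁻¹ := by
        rw [eG_inv]
      rw [h3]
      group
    rw [key, Units.val_mul, Units.val_mul, ← Matrix.mulVec_mulVec, ← Matrix.mulVec_mulVec]
    exact spos_e (hpos m (-n) (neg_ne_zero.mpr hn) _ (spos_e hx))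
  · obtain ⟨m, hm⟩ : ∃ m : ℕ, k = ((m + 1 : ℕ) : ℤ) := ⟨(k - 1).toNat, by omega⟩
    rw [hm, zpow_natCast]
    exact hpos m n hn x hx

/-- Natural action on column vectors. -/
@[reducible]
def glAct : MulAction (GL (Fin 6) ℤ) (Fin 6 → ℤ) where
  smul g v := g.val *ᵥ v
  one_smul v := by
    change (1 : GL (Fin 6) ℤ).val *ᵥ v = v
    rw [Units.val_one, Matrix.one_mulVec]
  mul_smul g h v := by
    change (g * h).val *ᵥ v = g.val *ᵥ (h.val *ᵥ v)
    rw [Units.val_mul, Matrix.mulVec_mulVec]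

open scoped Pointwise in
theorem pingpong {T R : GL (Fin 6) ℤ} (hT : T.val = tM.mat) (hR : R.val = rM.mat) :
    Function.Injective (FreeGroup.lift ![T, R]) := by
  let _ := glAct
  have hsm : ∀ (g : GL (Fin 6) ℤ) (v : Fin 6 → ℤ), g • v = g.val *ᵥ v := fun _ _ => rfl
  let a : Fin 2 → GL (Fin 6) ℤ := ![T, R]
  have : FreeGroup.lift ![T, R] =
      (Monoid.CoprodI.lift fun i => FreeGroup.lift fun _ => a i).comp
        (@freeGroupEquivCoprodI (Fin 2)).toMonoidHom := by
    ext i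
    simp [a]
  rw [this, MonoidHom.coe_comp]
  clear this
  refine Function.Injective.comp ?_ (MulEquiv.injective freeGroupEquivCoprodI)
  change Function.Injective
    (Monoid.CoprodI.lift fun i : Fin 2 => FreeGroup.lift fun _ : Unit => a i)
  let H : Fin 2 → Type := fun _i => FreeGroup Unit
  let f : ∀ i, H i →* GL (Fin 6) ℤ := fun i => FreeGroup.lift fun _ => a i
  let X0 : Set (Fin 6 → ℤ) := {x | ∃ n : ℤ, n ≠ 0 ∧ ∃ y, SPos y ∧ x = (T ^ n).val *ᵥ y}
  let X1 : Set (Fin 6 → ℤ) := {x | SPos x}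
  let X : Fin 2 → Set (Fin 6 → ℤ) := ![X0, X1]
  obtain ⟨x0, hx0⟩ := pos_nonempty
  have hd : Disjoint X0 X1 := by
    rw [Set.disjoint_left]
    rintro x ⟨n, hn, y, hy, rfl⟩ hx
    change SPos _ at hx
    rw [T_zpow hT] at hx
    exact spos_disj hn hy hx
  apply Monoid.CoprodI.lift_injective_of_ping_pong f _ X
  · intro i
    fin_cases i
    · exact ⟨(T ^ (1 : ℤ)).val *ᵥ x0, 1, one_ne_zero, x0, Or.inl hx0, rfl⟩
    · exact ⟨x0, Or.inl hx0⟩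
  · intro i j hij
    fin_cases i <;> fin_cases j
    · exact absurd rfl hij
    · exact hd
    · exact hd.symm
    · exact absurd rfl hij
  · intro i j hij
    refine FreeGroup.freeGroupUnitEquivInt.forall_congr_left.mpr ?_
    intro n hne1
    change FreeGroup.lift (fun _ => a i) (FreeGroup.of () ^ n) • X j ⊆ X i
    simp only [map_zpow, FreeGroup.lift_apply_of]
    have hn : n ≠ 0 := by
      rintro rfl
      apply hne1
      simp [H, FreeGroup.freeGroupUnitEquivInt]
    clear hne1
    rintro _ ⟨x, hx, rfl⟩
    fin_cases i <;> fin_cases j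
    · exact absurd rfl hij
    · exact ⟨n, hn, x, hx, rfl⟩
    · obtain ⟨m, hm, y, hy, rfl⟩ := hx
      change SPos ((R ^ n).val *ᵥ ((T ^ m).val *ᵥ y))
      rw [Matrix.mulVec_mulVec, ← Units.val_mul]
      exact spos_RT hT hR hn hm hy
    · exact absurd rfl hij
  · right
    refine ⟨0, ?_⟩
    change _ ≤ Cardinal.mk (FreeGroup Unit)
    rw [Cardinal.mk_congr FreeGroup.freeGroupUnitEquivInt, Cardinal.mk_denumerable]
    exact (Cardinal.natCast_lt_aleph0 (n := 3)).le

theorem free_conclusion {G : Type} [Group G] (t r : G)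
    (hF : Function.Injective (FreeGroup.lift ![t, r])) :
    ¬ IsOfFinOrder t ∧ ¬ IsOfFinOrder r ∧
    Function.Injective
      (Monoid.Coprod.lift (Subgroup.zpowers t).subtype (Subgroup.zpowers r).subtype) ∧
    (Monoid.Coprod.lift (Subgroup.zpowers t).subtype (Subgroup.zpowers r).subtype).range =
      Subgroup.closure {t, r} ∧
    Nonempty ((Subgroup.closure {t, r} : Subgroup G) ≃* FreeGroup (Fin 2)) := by
  have hFt : FreeGroup.lift ![t, r] (FreeGroup.of 0) = t := by simp
  have hFr : FreeGroup.lift ![t, r] (FreeGroup.of 1) = r := by simp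
  have hrange : (FreeGroup.lift ![t, r]).range = Subgroup.closure {t, r} := by
    rw [FreeGroup.range_lift_eq_closure]
    congr 1
    ext x
    simp [eq_comm, or_comm]
  have hord : ∀ i : Fin 2, ¬ IsOfFinOrder (FreeGroup.lift ![t, r] (FreeGroup.of i)) := by
    intro i h
    rw [isOfFinOrder_iff_pow_eq_one] at h
    obtain ⟨n, hn, h⟩ := h
    rw [← map_pow, ← map_one (FreeGroup.lift ![t, r])] at h
    have h1 := hF h
    rw [← one_pow n] at h1
    exact FreeGroup.of_ne_one i (pow_left_injective hn.ne' h1)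
  refine ⟨by simpa only [hFt] using hord 0, by simpa only [hFr] using hord 1, ?_, ?_, ?_⟩
  · let e := MonoidHom.ofInjective hF
    have ht : Subgroup.zpowers t ≤ (FreeGroup.lift ![t, r]).range := by
      rw [Subgroup.zpowers_le]
      exact ⟨_, hFt⟩
    have hr : Subgroup.zpowers r ≤ (FreeGroup.lift ![t, r]).range := by
      rw [Subgroup.zpowers_le]
      exact ⟨_, hFr⟩
    let p : Monoid.Coprod (Subgroup.zpowers t) (Subgroup.zpowers r) →* FreeGroup (Fin 2) :=
      Monoid.Coprod.lift (e.symm.toMonoidHom.comp (Subgroup.inclusion ht))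
        (e.symm.toMonoidHom.comp (Subgroup.inclusion hr))
    let c : FreeGroup (Fin 2) →* Monoid.Coprod (Subgroup.zpowers t) (Subgroup.zpowers r) :=
      FreeGroup.lift ![Monoid.Coprod.inl ⟨t, Subgroup.mem_zpowers t⟩,
        Monoid.Coprod.inr ⟨r, Subgroup.mem_zpowers r⟩]
    have hpe : ∀ y : (FreeGroup.lift ![t, r]).range, FreeGroup.lift ![t, r] (e.symm y) = y := by
      intro y
      exact congrArg Subtype.val (e.apply_symm_apply y)
    have h1 : Monoid.Coprod.lift (Subgroup.zpowers t).subtype (Subgroup.zpowers r).subtype =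
        (FreeGroup.lift ![t, r]).comp p := by
      refine Monoid.Coprod.hom_ext ?_ ?_
      · ext x
        simp [p, hpe]
      · ext x
        simp [p, hpe]
    have h2 : c.comp p = MonoidHom.id _ := by
      refine Monoid.Coprod.hom_ext ?_ ?_
      · ext ⟨x, n, rfl⟩
        have : e.symm ⟨t ^ n, ht ⟨n, rfl⟩⟩ = FreeGroup.of 0 ^ n := by
          apply hF
          rw [hpe, map_zpow, hFt]
        change c (p (Monoid.Coprod.inl _)) = Monoid.Coprod.inl _
        have h3 : p (Monoid.Coprod.inl ⟨t ^ n, n, rfl⟩) = FreeGroup.of 0 ^ n := by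
          rw [← this]
          simp [p, Subgroup.inclusion]
        refine (congrArg c h3).trans ?_
        rw [map_zpow]
        simp only [c, FreeGroup.lift_apply_of, Matrix.cons_val_zero]
        rw [← map_zpow]
        rfl
      · ext ⟨x, n, rfl⟩
        have : e.symm ⟨r ^ n, hr ⟨n, rfl⟩⟩ = FreeGroup.of 1 ^ n := by
          apply hF
          rw [hpe, map_zpow, hFr]
        change c (p (Monoid.Coprod.inr _)) = Monoid.Coprod.inr _
        have h3 : p (Monoid.Coprod.inr ⟨r ^ n, n, rfl⟩) = FreeGroup.of 1 ^ n := by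
          rw [← this]
          simp [p, Subgroup.inclusion]
        refine (congrArg c h3).trans ?_
        rw [map_zpow]
        simp only [c, FreeGroup.lift_apply_of, Matrix.cons_val_one, Matrix.cons_val_fin_one]
        rw [← map_zpow]
        rfl
    rw [h1, MonoidHom.coe_comp]
    refine hF.comp ?_
    exact Function.LeftInverse.injective (g := c) fun x => DFunLike.congr_fun h2 x
  · rw [Monoid.Coprod.range_lift, Subgroup.range_subtype, Subgroup.range_subtype,
      Subgroup.zpowers_eq_closure, Subgroup.zpowers_eq_closure, ← Subgroup.closure_union]
    rfl
  · rw [← hrange]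
    exact ⟨(MonoidHom.ofInjective hF).symm⟩

def fM : M6 :=
  ⟨⟨0, 0, 0, 0, 0, -1⟩, ⟨1, 0, 0, 0, 0, 6⟩, ⟨0, 1, 0, 0, 0, -15⟩, ⟨0, 0, 1, 0, 0, 20⟩,
   ⟨0, 0, 0, 1, 0, -15⟩, ⟨0, 0, 0, 0, 1, 6⟩⟩

def gM : M6 :=
  ⟨⟨0, 0, 0, 0, 0, -1⟩, ⟨1, 0, 0, 0, 0, -4⟩, ⟨0, 1, 0, 0, 0, -7⟩, ⟨0, 0, 1, 0, 0, -8⟩,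
   ⟨0, 0, 0, 1, 0, -7⟩, ⟨0, 0, 0, 0, 1, -4⟩⟩

theorem fM_mat : companionF = fM.mat := by
  simp [companionF, fM, M6.mat, V6.vec]

theorem gM_mat : companionG = gM.mat := by
  simp [companionG, gM, M6.mat, V6.vec]

/-- The hypergeometric group is free of rank two. -/
theorem hypergeometric_free_of_rank_two
    (A B : GL (Fin 6) ℤ)
    (hA : (A : Matrix (Fin 6) (Fin 6) ℤ) = companionF)
    (hB : (B : Matrix (Fin 6) (Fin 6) ℤ) = companionG) :
    ¬ IsOfFinOrder (A⁻¹ * B) ∧ ¬ IsOfFinOrder (A⁻¹ * B * A) ∧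
    Subgroup.closure {A, B} = Subgroup.closure {A⁻¹ * B, A⁻¹ * B * A} ∧
    Function.Injective
      (Monoid.Coprod.lift (Subgroup.zpowers (A⁻¹ * B)).subtype
        (Subgroup.zpowers (A⁻¹ * B * A)).subtype) ∧
    (Monoid.Coprod.lift (Subgroup.zpowers (A⁻¹ * B)).subtype
        (Subgroup.zpowers (A⁻¹ * B * A)).subtype).range = Subgroup.closure {A, B} ∧
    Nonempty ((Subgroup.closure {A, B} : Subgroup (GL (Fin 6) ℤ)) ≃* FreeGroup (Fin 2)) := by
  have hT : (A⁻¹ * B).val = tM.mat := by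
    have h : (A * (A⁻¹ * B)).val = fM.mat * tM.mat := by
      rw [mul_inv_cancel_left, hB, gM_mat, ← M6.mat_mul]
      exact congrArg M6.mat (by decide +kernel)
    rw [Units.val_mul, ← fM_mat, ← hA] at h
    exact A.isUnit.mul_left_cancel h
  have hR : (A⁻¹ * B * A).val = rM.mat := by
    rw [Units.val_mul, hT, hA, fM_mat, ← M6.mat_mul]
    exact congrArg M6.mat (by decide +kernel)
  have hc : Subgroup.closure {A, B} = Subgroup.closure {A⁻¹ * B, A⁻¹ * B * A} := by
    apply le_antisymm
    · have ht : A⁻¹ * B ∈ Subgroup.closure {A⁻¹ * B, A⁻¹ * B * A} :=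
        Subgroup.subset_closure (by simp)
      have hr : A⁻¹ * B * A ∈ Subgroup.closure {A⁻¹ * B, A⁻¹ * B * A} :=
        Subgroup.subset_closure (by simp)
      have ha : A ∈ Subgroup.closure {A⁻¹ * B, A⁻¹ * B * A} := by
        have := mul_mem (inv_mem ht) hr
        rwa [inv_mul_cancel_left] at this
      have hb : B ∈ Subgroup.closure {A⁻¹ * B, A⁻¹ * B * A} := by
        have := mul_mem ha ht
        rwa [mul_inv_cancel_left] at this
      rw [Subgroup.closure_le]
      rintro x (rfl | rfl)
      · exact ha
      · exact hb
    · have ha : A ∈ Subgroup.closure {A, B} := Subgroup.subset_closure (by simp)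
      have hb : B ∈ Subgroup.closure {A, B} := Subgroup.subset_closure (by simp)
      rw [Subgroup.closure_le]
      rintro x (rfl | rfl)
      · exact mul_mem (inv_mem ha) hb
      · exact mul_mem (mul_mem (inv_mem ha) hb) ha
  obtain ⟨h1, h2, h3, h4, h5⟩ := free_conclusion _ _ (pingpong hT hR)
  refine ⟨h1, h2, hc, h3, ?_, ?_⟩
  · rw [h4, hc]
  · rw [hc]
    exact h5
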